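/- The identity 2β = α₃ + α₄ holds, where β = (1/2)∫_{π/4}^{π/2} (p₈(1, tan θ))^{−1/4}·(cos θ)^{−2} dθ, α₃ = ∫₀¹ (p₈(u,1))^{−1/2} du, and α₄ = ∫₁² ∫_{g(t)}¹ (p₈(u,1))^{−1/2} du dt with g(t) = ((t⁴ + 48)^{1/2} − 7)^{1/4}. -/

import Mathlib

open Real

/-- p₈(x,y) = x⁸ + 14x⁴y⁴ + y⁸ for real x, y. -/
def p8f (x y : ℝ) : ℝ := x ^ 8 + 14 * x ^ 4 * y ^ 4 + y ^ 8

/-!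
Write `p u = p8f u 1`. Since `p8f` is homogeneous of degree `8`, the substitution `u = cot θ` turns
`2β` into `∫₀¹ p ^ (-1/4)`. Since `p u + 48 = (u ^ 4 + 7) ^ 2`, the function `g` is the inverse of
`h = p ^ (1/4)`, which maps `[0, 1]` onto `[1, 2]`. Hence `α₄` is the integral of `p ^ (-1/2)` over
the region `1 ≤ t ≤ h u`, `0 ≤ u ≤ 1`, that is, `∫₀¹ (h - 1) p ^ (-1/2) = 2β - α₃`.
-/

open Set intervalIntegral
open scoped Interval

section InverseFunction

theorem continuousOn_image_of_leftInvOn {X Y : Type*} [TopologicalSpace X]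
    [TopologicalSpace Y] [T2Space Y] {f : X → Y} {g : Y → X} {s : Set X} (hs : IsCompact s)
    (hf : ContinuousOn f s) (hg : LeftInvOn g f s) : ContinuousOn g (f '' s) := by
  refine continuousOn_iff_isClosed.2 fun t ht ↦ ⟨f '' (s ∩ t), ?_, ?_⟩
  · exact ((hs.inter_right ht).image_of_continuousOn (hf.mono inter_subset_left)).isClosed
  · rw [inter_eq_left.2 (image_mono inter_subset_left), inter_comm s t, hg.image_inter',
      inter_comm]

variable {E : Type*} [NormedAddCommGroup E] [NormedSpace ℝ E] [CompleteSpace E] {a b : ℝ}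

theorem integral_deriv_smul_integral_left {h h' : ℝ → ℝ} {w : ℝ → E}
    (hh : ∀ x ∈ [[a, b]], HasDerivAt h (h' x) x)
    (hh' : IntervalIntegrable h' MeasureTheory.volume a b) (hw : ContinuousOn w [[a, b]]) :
    ∫ x in a..b, h' x • ∫ u in x..b, w u = ∫ u in a..b, (h u - h a) • w u := by
  have hF : ∀ x ∈ Ioo (min a b) (max a b), HasDerivAt (fun x ↦ ∫ u in x..b, w u) (-w x) x := by
    intro x hx
    have hwx : ContinuousOn w (Ioo (min a b) (max a b)) := hw.mono Ioo_subset_Icc_self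
    exact integral_hasDerivAt_left
      (hw.mono (uIcc_subset_uIcc_right (Ioo_subset_Icc_self hx))).intervalIntegrable
      (hwx.stronglyMeasurableAtFilter isOpen_Ioo x hx) (hwx.continuousAt (Ioo_mem_nhds hx.1 hx.2))
  have hparts := integral_smul_deriv_eq_deriv_smul_of_hasDerivAt
    (u := fun x ↦ h x - h a) (u' := h') (v := fun x ↦ ∫ u in x..b, w u) (v' := fun x ↦ -w x)
    (fun x hx ↦ ((hh x hx).sub_const _).continuousAt.continuousWithinAt)
    (continuousOn_primitive_interval_left hw.integrableOn_uIcc)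
    (fun x hx ↦ (hh x (Ioo_subset_Icc_self hx)).sub_const _) hF hh' hw.neg.intervalIntegrable
  simpa using hparts.symm

theorem integral_integral_of_leftInvOn {h h' g : ℝ → ℝ} {w : ℝ → E}
    (hh : ∀ x ∈ [[a, b]], HasDerivAt h (h' x) x) (hh' : ContinuousOn h' [[a, b]])
    (hw : ContinuousOn w [[a, b]]) (hg : LeftInvOn g h [[a, b]]) :
    ∫ t in h a..h b, ∫ u in g t..b, w u = ∫ u in a..b, (h u - h a) • w u := by
  have hgc : ContinuousOn g (h '' [[a, b]]) :=
    continuousOn_image_of_leftInvOn isCompact_uIcc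
      (fun x hx ↦ (hh x hx).continuousAt.continuousWithinAt) hg
  have hFg : ContinuousOn (fun t ↦ ∫ u in g t..b, w u) (h '' [[a, b]]) :=
    (continuousOn_primitive_interval_left hw.integrableOn_uIcc).comp hgc
      (forall_mem_image.2 fun x hx ↦ by rwa [hg hx])
  calc ∫ t in h a..h b, ∫ u in g t..b, w u
      = ∫ x in a..b, h' x • ∫ u in g (h x)..b, w u := (integral_deriv_smul_comp' hh hh' hFg).symm
    _ = ∫ x in a..b, h' x • ∫ u in x..b, w u := integral_congr fun x hx ↦ by simp only [hg hx]
    _ = ∫ u in a..b, (h u - h a) • w u :=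
      integral_deriv_smul_integral_left hh hh'.intervalIntegrable hw

end InverseFunction

theorem hasDerivAt_cot {θ : ℝ} (hθ : sin θ ≠ 0) : HasDerivAt cot (-(1 / sin θ ^ 2)) θ := by
  have hquot := (hasDerivAt_cos θ).div (hasDerivAt_sin θ) hθ
  rw [funext cot_eq_cos_div_sin]
  refine hquot.congr_deriv ?_
  rw [← neg_div, ← sin_sq_add_cos_sq θ]
  ring

theorem integral_comp_cot_div_sin_sq {φ : ℝ → ℝ} {a b : ℝ} (hsin : ∀ θ ∈ [[a, b]], sin θ ≠ 0)
    (hφ : ContinuousOn φ (cot '' [[a, b]])) :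
    ∫ θ in a..b, φ (cot θ) / sin θ ^ 2 = ∫ u in cot b..cot a, φ u := by
  have hsub := integral_comp_mul_deriv' (fun θ hθ ↦ hasDerivAt_cot (hsin θ hθ))
    (continuousOn_const.div (by fun_prop) fun θ hθ ↦ pow_ne_zero 2 (hsin θ hθ)).neg hφ
  rw [integral_symm (cot a), ← hsub, ← integral_neg]
  simp only [Function.comp_apply, mul_neg, neg_neg, mul_one_div]

/-- In polar coordinates the curve `F = 1` is `r ^ 2 = F 1 (tan θ) ^ (-2 / n) / cos θ ^ 2`, so both
sides are twice the area of the part of `F ≤ 1` in the sector `a ≤ θ ≤ b`. -/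
theorem integral_homogeneous_one_tan {F : ℝ → ℝ → ℝ} {n : ℕ} {a b : ℝ} (hn : n ≠ 0)
    (hhom : ∀ c x y, 0 < c → F (c * x) (c * y) = c ^ n * F x y)
    (hpos : ∀ u, 0 ≤ u → 0 < F u 1) (hcont : ContinuousOn (fun u ↦ F u 1) (Ici 0))
    (ha : 0 < a) (hab : a ≤ b) (hb : b ≤ π / 2) :
    ∫ θ in a..b, F 1 (tan θ) ^ (-2 / n : ℝ) / cos θ ^ 2 =
      ∫ u in cot b..cot a, F u 1 ^ (-2 / n : ℝ) := by
  have hsin : ∀ θ ∈ Icc a b, 0 < sin θ := fun θ hθ ↦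
    sin_pos_of_pos_of_lt_pi (by linarith [hθ.1]) (by linarith [hθ.2, pi_pos])
  have hcot : ∀ θ ∈ Icc a b, 0 ≤ cot θ := fun θ hθ ↦ by
    rw [cot_eq_cos_div_sin]
    exact div_nonneg (cos_nonneg_of_mem_Icc ⟨by linarith [hθ.1, pi_pos], by linarith [hθ.2]⟩)
      (hsin θ hθ).le
  have hφ : ContinuousOn (fun u ↦ F u 1 ^ (-2 / n : ℝ)) (Ici 0) :=
    hcont.rpow_const fun u hu ↦ .inl (hpos u hu).ne'
  rw [← integral_comp_cot_div_sin_sq (fun θ hθ ↦ (hsin θ (uIcc_of_le hab ▸ hθ)).ne')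
    (hφ.mono (image_subset_iff.2 fun θ hθ ↦ hcot θ (uIcc_of_le hab ▸ hθ)))]
  -- The endpoint `π / 2`, where `tan` and `1 / cos ^ 2` take junk values, is left out.
  refine integral_congr_Ioo_of_le hab fun θ hθ ↦ ?_
  have hs : 0 < sin θ := hsin θ (Ioo_subset_Icc_self hθ)
  have hc : 0 < cos θ := cos_pos_of_mem_Ioo ⟨by linarith [hθ.1, pi_pos], by linarith [hθ.2]⟩
  have ht : 0 < tan θ := tan_eq_sin_div_cos θ ▸ div_pos hs hc
  have hF : F 1 (tan θ) = tan θ ^ n * F (cot θ) 1 := by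
    rw [← hhom _ _ _ ht, mul_one, ← tan_inv_eq_cot, mul_inv_cancel₀ ht.ne']
  have htan : (tan θ ^ n) ^ (-2 / n : ℝ) = (tan θ ^ 2)⁻¹ := by
    rw [← rpow_natCast, ← rpow_mul ht.le, mul_div_cancel₀ _ (Nat.cast_ne_zero.2 hn),
      rpow_neg ht.le, rpow_two]
  rw [hF, mul_rpow (by positivity) (hpos _ (hcot θ (Ioo_subset_Icc_self hθ))).le, htan,
    tan_eq_sin_div_cos]
  field_simp

theorem p8f_mul_mul (c x y : ℝ) : p8f (c * x) (c * y) = c ^ 8 * p8f x y := by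
  unfold p8f; ring

theorem p8f_one_right_pos (u : ℝ) : 0 < p8f u 1 := by
  unfold p8f; positivity

theorem contDiff_p8f_one_right {n : WithTop ℕ∞} : ContDiff ℝ n fun u ↦ p8f u 1 := by
  unfold p8f; fun_prop

theorem continuous_p8f_one_right : Continuous fun u ↦ p8f u 1 :=
  (contDiff_p8f_one_right (n := 0)).continuous

theorem continuous_one_div_sqrt_p8f : Continuous fun u ↦ 1 / √(p8f u 1) :=
  continuous_const.div continuous_p8f_one_right.sqrt fun u ↦
    (sqrt_pos.2 (p8f_one_right_pos u)).ne'

theorem p8f_one_right_add (u : ℝ) : p8f u 1 + 48 = (u ^ 4 + 7) ^ 2 := by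
  unfold p8f; ring

theorem leftInvOn_p8f_one_right_rpow :
    LeftInvOn (fun t : ℝ ↦ (√(t ^ 4 + 48) - 7) ^ (1 / 4 : ℝ)) (fun u ↦ p8f u 1 ^ (1 / 4 : ℝ))
      (Ici 0) := by
  intro u hu
  have hroot {x : ℝ} (hx : 0 ≤ x) : (x ^ 4) ^ (1 / 4 : ℝ) = x := by
    simpa using pow_rpow_inv_natCast hx four_ne_zero
  have hpow : (p8f u 1 ^ (1 / 4 : ℝ)) ^ 4 = p8f u 1 := by
    simpa using rpow_inv_natCast_pow (p8f_one_right_pos u).le four_ne_zero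
  beta_reduce
  rw [hpow, p8f_one_right_add, sqrt_sq (by positivity), add_sub_cancel_right, hroot hu]

theorem integral_p8f_tan :
    ∫ θ in (π / 4)..(π / 2), p8f 1 (tan θ) ^ (-(1 : ℝ) / 4) * cos θ ^ (-(2 : ℝ)) =
      ∫ u in (0 : ℝ)..1, p8f u 1 ^ (-(1 : ℝ) / 4) := by
  have hsub := integral_homogeneous_one_tan (n := 8) (a := π / 4) (b := π / 2) (by norm_num)
    (fun c x y _ ↦ p8f_mul_mul c x y) (fun u _ ↦ p8f_one_right_pos u)
    continuous_p8f_one_right.continuousOn (by positivity) (by linarith [pi_pos]) le_rfl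
  have hexp : (-2 / (8 : ℕ) : ℝ) = -1 / 4 := by norm_num
  have hcot₁ : cot (π / 4) = 1 := by rw [← tan_inv_eq_cot, tan_pi_div_four, inv_one]
  have hcot₂ : cot (π / 2) = 0 := by rw [cot_eq_cos_div_sin, cos_pi_div_two, zero_div]
  rw [hexp, hcot₁, hcot₂] at hsub
  simpa only [rpow_neg_ofNat, zpow_neg, zpow_ofNat, ← div_eq_mul_inv] using hsub

theorem integral_integral_one_div_sqrt_p8f :
    ∫ t in (1 : ℝ)..2, ∫ u in (√(t ^ 4 + 48) - 7) ^ (1 / 4 : ℝ)..1, 1 / √(p8f u 1) =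
      (∫ u in (0 : ℝ)..1, p8f u 1 ^ (-(1 : ℝ) / 4)) - ∫ u in (0 : ℝ)..1, 1 / √(p8f u 1) := by
  have hsmooth : ContDiff ℝ 1 fun u ↦ p8f u 1 ^ (1 / 4 : ℝ) :=
    contDiff_p8f_one_right.rpow_const_of_ne fun u ↦ (p8f_one_right_pos u).ne'
  have hinv := integral_integral_of_leftInvOn (a := 0) (b := 1)
    (fun u _ ↦ (hsmooth.differentiable one_ne_zero u).hasDerivAt)
    (hsmooth.continuous_deriv le_rfl).continuousOn continuous_one_div_sqrt_p8f.continuousOn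
    (leftInvOn_p8f_one_right_rpow.mono (uIcc_of_le (zero_le_one' ℝ) ▸ Icc_subset_Ici_self))
  have hzero : p8f 0 1 ^ (1 / 4 : ℝ) = 1 := by norm_num [p8f]
  have hone : p8f 1 1 ^ (1 / 4 : ℝ) = 2 := by
    rw [show p8f 1 1 = (2 : ℝ) ^ (4 : ℝ) by norm_num [p8f], ← rpow_mul zero_le_two]
    norm_num
  have hmul (u : ℝ) :
      (p8f u 1 ^ (1 / 4 : ℝ) - 1) • (1 / √(p8f u 1)) =
        p8f u 1 ^ (-(1 : ℝ) / 4) - 1 / √(p8f u 1) := by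
    rw [smul_eq_mul, sub_mul, one_mul, mul_one_div, sqrt_eq_rpow,
      ← rpow_sub (p8f_one_right_pos u)]
    norm_num
  have hint : Continuous fun u ↦ p8f u 1 ^ (-(1 : ℝ) / 4) :=
    continuous_p8f_one_right.rpow_const fun u ↦ .inl (p8f_one_right_pos u).ne'
  rw [hzero, hone] at hinv
  simp only [hmul] at hinv
  rwa [integral_sub (hint.intervalIntegrable _ _)
    (continuous_one_div_sqrt_p8f.intervalIntegrable _ _)] at hinv

theorem stmt18 (β α₃ α₄ : ℝ) (g : ℝ → ℝ)
    (hβ : β = (1 / 2) * ∫ θ in (π / 4)..(π / 2),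
      (p8f 1 (Real.tan θ)) ^ (-(1 : ℝ) / 4) * (Real.cos θ) ^ (-(2 : ℝ)))
    (hg : ∀ t, g t = (Real.sqrt (t ^ 4 + 48) - 7) ^ ((1 : ℝ) / 4))
    (hα₃ : α₃ = ∫ u in (0 : ℝ)..1, 1 / Real.sqrt (p8f u 1))
    (hα₄ : α₄ = ∫ t in (1 : ℝ)..2, ∫ u in g t..1, 1 / Real.sqrt (p8f u 1)) :
    2 * β = α₃ + α₄ := by
  simp only [hg] at hα₄
  rw [hβ, hα₃, hα₄, integral_p8f_tan, integral_integral_one_div_sqrt_p8f]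
  ring
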